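/- Let t be an integer with t > 2. Every (t,2) broadcast S ⊆ ℤ×ℤ satisfies liminf_{n→∞} |S ∩ V_n|/(2n+1)² ≥ 1/(2(t−1)²), where V_n = {(a,b) ∈ ℤ×ℤ : |a| ≤ n, |b| ≤ n}. -/

import Mathlib

open Filter Topology

/-- Graph (L¹) distance on the infinite grid ℤ×ℤ. -/
def gridDist (u v : ℤ × ℤ) : ℕ := (u.1 - v.1).natAbs + (u.2 - v.2).natAbs

open Classical in
/-- Total signal received at `v` from towers of strength `t` located at the points of `S`:
the finite sum `∑_{T ∈ S, dist(v,T) < t} (t − dist(v,T))`. -/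
noncomputable def totalSignal (t : ℕ) (S : Set (ℤ × ℤ)) (v : ℤ × ℤ) : ℕ :=
  ∑ T ∈ (Finset.Icc (v.1 - (t : ℤ)) (v.1 + (t : ℤ)) ×ˢ
      Finset.Icc (v.2 - (t : ℤ)) (v.2 + (t : ℤ))).filter
      (fun T => T ∈ S ∧ gridDist v T < t),
    (t - gridDist v T)

/-- `S` is a `(t,r)` broadcast if every vertex receives total signal at least `r`. -/
def IsBroadcast (t r : ℕ) (S : Set (ℤ × ℤ)) : Prop :=
  ∀ v : ℤ × ℤ, r ≤ totalSignal t S v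

/-- The standard pattern `T(d,e) = {(dx+ey, y) : x, y ∈ ℤ}`. -/
def stdPattern (d e : ℤ) : Set (ℤ × ℤ) := {p | ∃ x y : ℤ, p = (d * x + e * y, y)}

open Classical in
/-- The number of points of `S` in the square `V_n = {(a,b) : |a| ≤ n, |b| ≤ n}`. -/
noncomputable def gridCount (S : Set (ℤ × ℤ)) (n : ℕ) : ℕ :=
  ((Finset.Icc (-(n : ℤ)) (n : ℤ) ×ˢ Finset.Icc (-(n : ℤ)) (n : ℤ)).filter
    (fun v => v ∈ S)).card

/-!
Put `r = t - 1`. A ball of radius `r` contains `2 * r ^ 2` horizontal edges of the grid, so the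
bound follows once the towers cover at least one edge per grid point on average, counted with
multiplicity. For this, every uncovered edge is matched, injectively, with a nearby doubly covered
one. An endpoint of an uncovered edge has no tower at distance less than `r`, hence it has two
towers at distance exactly `r`, and in general some of the balls around the two endpoints overlap
in an edge near which the given edge is the only uncovered one. The exception is a pinwheel, in
which four balls meet the endpoints only with their corners. There, the vertex diagonally above one
endpoint is still short of signal, and the ball of a fifth tower serving it provides the overlap.
-/

theorem gridDist_le_iff {u v : ℤ × ℤ} {r : ℕ} :
    gridDist u v ≤ r ↔ u.1 - v.1 + (u.2 - v.2) ≤ r ∧ u.1 - v.1 - (u.2 - v.2) ≤ r ∧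
      v.1 - u.1 + (u.2 - v.2) ≤ r ∧ v.1 - u.1 - (u.2 - v.2) ≤ r := by
  unfold gridDist
  omega

/-- The towers of `S` whose ball of radius `r` contains the vertex `v`. -/
def towersWithin (S : Set (ℤ × ℤ)) (r : ℕ) (v : ℤ × ℤ) : Set (ℤ × ℤ) :=
  {T | T ∈ S ∧ gridDist v T ≤ r}

/-- What a broadcast of strength `r + 1` and signal `2` provides: each vertex has a tower at
distance less than `r`, or two towers at distance at most `r`. -/
def ReachesTwice (S : Set (ℤ × ℤ)) (r : ℕ) : Prop :=
  ∀ v, (∃ T ∈ S, gridDist v T < r) ∨ (towersWithin S r v).Nontrivial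

/-- The towers of `S` whose ball of radius `r` contains the horizontal edge with left endpoint `e`.
Horizontal edges are identified with their left endpoints throughout. -/
def edgeTowers (S : Set (ℤ × ℤ)) (r : ℕ) (e : ℤ × ℤ) : Set (ℤ × ℤ) :=
  towersWithin S r e ∩ towersWithin S r (e.1 + 1, e.2)

/-- The horizontal edges contained in no ball of radius `r` around a tower of `S`. -/
def uncovered (S : Set (ℤ × ℤ)) (r : ℕ) : Set (ℤ × ℤ) :=
  {e | edgeTowers S r e = ∅}

/-- The horizontal edge joining `(x, y)` to `(x + s, y)`, where the direction `s` is `1` or `-1`. -/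
def edge (s x y : ℤ) : ℤ × ℤ :=
  (x + min s 0, y)

/-- The edge `f` and its two neighbours in the same row. -/
def rowNhd (f : ℤ × ℤ) : Set (ℤ × ℤ) :=
  {e | e.1 ∈ Set.Icc (f.1 - 1) (f.1 + 1) ∧ e.2 = f.2}

/-- The edge `f`, its two neighbours in the same row, and the edges just above and below it. -/
def crossNhd (f : ℤ × ℤ) : Set (ℤ × ℤ) :=
  {e | gridDist e f ≤ 1}

/-- The `3 × 3` block of edges centred at `f`. -/
def boxNhd (f : ℤ × ℤ) : Set (ℤ × ℤ) :=
  {e | e.1 ∈ Set.Icc (f.1 - 1) (f.1 + 1) ∧ e.2 ∈ Set.Icc (f.2 - 1) (f.2 + 1)}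

/-- The edge `e` is uncovered because it sits between the corners of two balls, centred vertically
above one endpoint and below the other, and it is the only uncovered edge in the `3 × 3` block of
the edge `f` diagonally adjacent to it. -/
def IsolatesDiagonally (S : Set (ℤ × ℤ)) (r : ℕ) (f e : ℤ × ℤ) : Prop :=
  ∃ s u x y : ℤ, (s = 1 ∨ s = -1) ∧ (u = 1 ∨ u = -1) ∧ e = edge s x y ∧ f = edge (-s) x (y + u) ∧
    (x, y + u * r) ∈ S ∧ (x + s, y - u * r) ∈ S ∧ boxNhd f ∩ uncovered S r = {e}

/-- The edge `e` can be recovered from `f` as the only uncovered edge in one of its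
neighbourhoods. -/
inductive Isolates (S : Set (ℤ × ℤ)) (r : ℕ) (f e : ℤ × ℤ) : Prop
  | row (h : rowNhd f ∩ uncovered S r = {e})
  | cross (h : crossNhd f ∩ uncovered S r = {e})
  | diagonal (h : IsolatesDiagonally S r f e)

/-- The endpoints of `edge s x y` are reached only by four balls, whose corners rotate around
that edge. -/
structure IsPinwheel (S : Set (ℤ × ℤ)) (r : ℕ) (s x y : ℤ) : Prop where
  dir : s = 1 ∨ s = -1
  towers_left : towersWithin S r (x, y) = {(x, y + r), (x - s * r, y)}
  towers_right : towersWithin S r (x + s, y) = {(x + s, y - r), (x + s + s * r, y)}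

/-- A tower at distance exactly `r` from the vertex `(x + s, y + 1)` next to a pinwheel, in the
quadrant of that vertex pointing away from the pinwheel. -/
structure IsFifthTower (S : Set (ℤ × ℤ)) (r : ℕ) (s x y : ℤ) (G : ℤ × ℤ) : Prop where
  mem : G ∈ S
  side : 0 ≤ s * (G.1 - (x + s))
  above : y + 1 ≤ G.2
  dist : s * (G.1 - (x + s)) + (G.2 - (y + 1)) = r

/-- The doubly covered edge assigned to the central edge of a pinwheel. It lies where the ball of a
fifth tower overlaps the upper ball of the pinwheel or, if the fifth tower is as low as it can be,
where it overlaps the front one. -/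
inductive PinwheelCompensates (S : Set (ℤ × ℤ)) (r : ℕ) (e f : ℤ × ℤ) : Prop
  | above (s x y : ℤ) (hp : IsPinwheel S r s x y) (he : e = edge s x y)
      (G : ℤ × ℤ) (hG : IsFifthTower S r s x y G) (hy : y + 2 ≤ G.2) (hf : f = edge s x (y + 2))
  | front (s x y : ℤ) (hp : IsPinwheel S r s x y) (he : e = edge s x y)
      (hG : (x + s + s * r, y + 1) ∈ S) (hf : f = edge s (x + 2 * s) (y + 1))

/-- The doubly covered edge `f` makes up for the uncovered edge `e`. -/
structure Compensates (S : Set (ℤ × ℤ)) (r : ℕ) (e f : ℤ × ℤ) : Prop where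
  nontrivial : (edgeTowers S r f).Nontrivial
  kind : Isolates S r f e ∨ PinwheelCompensates S r e f

section Compensation

variable {S : Set (ℤ × ℤ)} {r : ℕ} {s u x y : ℤ} {e e' f T T' : ℤ × ℤ}

theorem mem_towersWithin_iff (hT : T ∈ S) {v : ℤ × ℤ} :
    T ∈ towersWithin S r v ↔
      v.1 - T.1 + (v.2 - T.2) ≤ r ∧ v.1 - T.1 - (v.2 - T.2) ≤ r ∧
      T.1 - v.1 + (v.2 - T.2) ≤ r ∧ T.1 - v.1 - (v.2 - T.2) ≤ r :=
  (and_iff_right hT).trans gridDist_le_iff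

theorem mem_edgeTowers_iff (hT : T ∈ S) :
    T ∈ edgeTowers S r e ↔
      e.1 + 1 - T.1 + (e.2 - T.2) ≤ r ∧ e.1 + 1 - T.1 - (e.2 - T.2) ≤ r ∧
      T.1 - e.1 + (e.2 - T.2) ≤ r ∧ T.1 - e.1 - (e.2 - T.2) ≤ r := by
  simp only [edgeTowers, Set.mem_inter_iff, mem_towersWithin_iff hT]
  omega

theorem mem_edgeTowers_edge (hs : s = 1 ∨ s = -1) :
    T ∈ edgeTowers S r (edge s x y) ↔
      T ∈ towersWithin S r (x, y) ∧ T ∈ towersWithin S r (x + s, y) := by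
  rcases hs with rfl | rfl
  · simp [edgeTowers, edge]
  · simp [edgeTowers, edge, ← sub_eq_add_neg, and_comm]

theorem edge_neg_add (s x y : ℤ) : edge (-s) (x + s) y = edge s x y := by
  rw [edge, edge, Prod.mk.injEq]
  omega

theorem mem_rowNhd_iff :
    e ∈ rowNhd f ↔ (f.1 - 1 ≤ e.1 ∧ e.1 ≤ f.1 + 1) ∧ e.2 = f.2 :=
  Iff.rfl

theorem mem_boxNhd_iff :
    e ∈ boxNhd f ↔ (f.1 - 1 ≤ e.1 ∧ e.1 ≤ f.1 + 1) ∧ f.2 - 1 ≤ e.2 ∧ e.2 ≤ f.2 + 1 :=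
  Iff.rfl

theorem rowNhd_subset_crossNhd : rowNhd f ⊆ crossNhd f := fun e he =>
  gridDist_le_iff.2 (by rw [mem_rowNhd_iff] at he; omega)

theorem crossNhd_subset_boxNhd : crossNhd f ⊆ boxNhd f := fun e he =>
  mem_boxNhd_iff.2 (by have := gridDist_le_iff.1 he; omega)

theorem notMem_edgeTowers (he : e ∈ uncovered S r) : T ∉ edgeTowers S r e :=
  fun hT => Set.notMem_empty T (he ▸ hT)

theorem inter_uncovered_eq_singleton {N : Set (ℤ × ℤ)} (he : e ∈ uncovered S r) (heN : e ∈ N)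
    (hN : ∀ e' ∈ N, e' ≠ e → (edgeTowers S r e').Nonempty) : N ∩ uncovered S r = {e} :=
  Set.eq_singleton_iff_unique_mem.2 ⟨⟨heN, he⟩, fun e' he' => by
    by_contra hne
    exact (hN e' he'.1 hne).ne_empty he'.2⟩

theorem behind_of_uncovered (hs : s = 1 ∨ s = -1) (hU : edge s x y ∈ uncovered S r)
    (hT : T ∈ towersWithin S r (x, y)) :
    0 ≤ s * (x - T.1) ∧ s * (x - T.1) + (T.2 - y).natAbs = r := by
  have h : T ∉ towersWithin S r (x + s, y) := fun h =>
    notMem_edgeTowers hU ((mem_edgeTowers_edge hs).2 ⟨hT, h⟩)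
  rw [mem_towersWithin_iff hT.1] at h
  have hd := (mem_towersWithin_iff hT.1).1 hT
  rcases hs with rfl | rfl <;> omega

theorem ReachesTwice.nontrivial_of_uncovered (hS : ReachesTwice S r) (hs : s = 1 ∨ s = -1)
    (hU : edge s x y ∈ uncovered S r) : (towersWithin S r (x, y)).Nontrivial := by
  refine (hS (x, y)).resolve_left ?_
  rintro ⟨T, hT, hlt⟩
  obtain ⟨-, h⟩ := behind_of_uncovered hs hU ⟨hT, hlt.le⟩
  simp only [gridDist] at hlt
  rcases hs with rfl | rfl <;> omega

theorem compensates_of_behind (hs : s = 1 ∨ s = -1) (hU : edge s x y ∈ uncovered S r)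
    (hT : T ∈ towersWithin S r (x, y)) (hT' : T' ∈ towersWithin S r (x, y)) (hne : T ≠ T')
    (hlt : 0 < s * (x - T.1)) (hlt' : 0 < s * (x - T'.1)) :
    Compensates S r (edge s x y) (edge (-s) x y) := by
  have hd := (mem_towersWithin_iff hT.1).1 hT
  have hd' := (mem_towersWithin_iff hT'.1).1 hT'
  refine ⟨⟨T, ?_, T', ?_, hne⟩, .inl (.row (inter_uncovered_eq_singleton hU ?_ ?_))⟩
  · simp only [mem_edgeTowers_iff hT.1, edge]
    rcases hs with rfl | rfl <;> omega
  · simp only [mem_edgeTowers_iff hT'.1, edge]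
    rcases hs with rfl | rfl <;> omega
  · rw [mem_rowNhd_iff]
    exact ⟨by simp only [edge]; omega, rfl⟩
  · intro e he hne
    refine ⟨T, ?_⟩
    simp only [mem_rowNhd_iff, edge, ne_eq, Prod.ext_iff] at he hne
    simp only [mem_edgeTowers_iff hT.1]
    rcases hs with rfl | rfl <;> omega

theorem compensates_of_vertical (hr : 2 ≤ r) (hs : s = 1 ∨ s = -1) (hu : u = 1 ∨ u = -1)
    (hU : edge s x y ∈ uncovered S r) (hup : (x, y + u * r) ∈ S)
    (hT : T ∈ towersWithin S r (x + s, y)) (hlt : 0 < u * (T.2 - y)) :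
    Compensates S r (edge s x y) (edge s x (y + u)) := by
  obtain ⟨hside, hdist⟩ := behind_of_uncovered (s := -s) (x := x + s) (by omega)
    (by rwa [edge_neg_add]) hT
  refine ⟨⟨(x, y + u * r), ?_, T, ?_, ?_⟩,
    .inl (.cross (inter_uncovered_eq_singleton hU ?_ ?_))⟩
  · simp only [mem_edgeTowers_iff hup, edge]
    rcases hs with rfl | rfl <;> rcases hu with rfl | rfl <;> omega
  · simp only [mem_edgeTowers_iff hT.1, edge]
    rcases hs with rfl | rfl <;> rcases hu with rfl | rfl <;> omega
  · rintro rfl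
    rcases hs with rfl | rfl <;> omega
  · refine gridDist_le_iff.2 ?_
    simp only [edge]
    omega
  · intro e he hne
    have he := gridDist_le_iff.1 he
    simp only [edge, ne_eq, Prod.ext_iff] at he hne
    by_cases hcol : e.1 = x + min s 0 + s
    · refine ⟨T, ?_⟩
      simp only [mem_edgeTowers_iff hT.1]
      rcases hs with rfl | rfl <;> rcases hu with rfl | rfl <;> omega
    · refine ⟨(x, y + u * r), ?_⟩
      simp only [mem_edgeTowers_iff hup]
      rcases hs with rfl | rfl <;> rcases hu with rfl | rfl <;> omega

theorem compensates_of_diagonal (hr : 2 ≤ r) (hs : s = 1 ∨ s = -1) (hu : u = 1 ∨ u = -1)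
    (hU : edge s x y ∈ uncovered S r) (hup : (x, y + u * r) ∈ S) (hdown : (x + s, y - u * r) ∈ S)
    (hT : T ∈ towersWithin S r (x, y)) (hlt : 0 < s * (x - T.1)) (hlt' : 0 < u * (T.2 - y)) :
    Compensates S r (edge s x y) (edge (-s) x (y + u)) := by
  obtain ⟨-, hdist⟩ := behind_of_uncovered hs hU hT
  refine ⟨⟨(x, y + u * r), ?_, T, ?_, ?_⟩, .inl (.diagonal
    ⟨s, u, x, y, hs, hu, rfl, rfl, hup, hdown, inter_uncovered_eq_singleton hU ?_ ?_⟩)⟩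
  · simp only [mem_edgeTowers_iff hup, edge]
    rcases hs with rfl | rfl <;> rcases hu with rfl | rfl <;> omega
  · simp only [mem_edgeTowers_iff hT.1, edge]
    rcases hs with rfl | rfl <;> rcases hu with rfl | rfl <;> omega
  · rintro rfl
    omega
  · simp only [mem_boxNhd_iff, edge]
    omega
  · intro e he hne
    simp only [mem_boxNhd_iff, edge, ne_eq, Prod.ext_iff] at he hne
    by_cases hfar : e.2 = y + 2 * u ∨ (e.2 = y + u ∧ e.1 = x + min s 0)
    · refine ⟨(x, y + u * r), ?_⟩
      simp only [mem_edgeTowers_iff hup]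
      rcases hs with rfl | rfl <;> rcases hu with rfl | rfl <;> omega
    · refine ⟨T, ?_⟩
      simp only [mem_edgeTowers_iff hT.1]
      rcases hs with rfl | rfl <;> rcases hu with rfl | rfl <;> omega

theorem exists_corner_tower (hS : ReachesTwice S r) (hs : s = 1 ∨ s = -1)
    (hU : edge s x y ∈ uncovered S r) (hC : ∀ f, ¬ Compensates S r (edge s x y) f) :
    ∃ u : ℤ, (u = 1 ∨ u = -1) ∧ (x, y + u * r) ∈ S := by
  obtain ⟨T, hT, T', hT', hne⟩ := hS.nontrivial_of_uncovered hs hU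
  obtain ⟨⟨p, q⟩, hT, hle⟩ : ∃ T ∈ towersWithin S r (x, y), s * (x - T.1) ≤ 0 := by
    by_contra! hlt
    exact hC _ (compensates_of_behind hs hU hT hT' hne (hlt T hT) (hlt T' hT'))
  obtain ⟨hside, hdist⟩ := behind_of_uncovered hs hU hT
  obtain rfl : p = x := by rcases hs with rfl | rfl <;> omega
  obtain rfl | rfl : q = y + 1 * r ∨ q = y + -1 * r := by omega
  · exact ⟨1, .inl rfl, hT.1⟩
  · exact ⟨-1, .inr rfl, hT.1⟩

theorem exists_opposite_corner_towers (hr : 2 ≤ r) (hS : ReachesTwice S r)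
    (hU : e ∈ uncovered S r) (hC : ∀ f, ¬ Compensates S r e f) :
    ∃ s x y, (s = 1 ∨ s = -1) ∧ e = edge s x y ∧ (x, y + r) ∈ S ∧ (x + s, y - r) ∈ S := by
  obtain ⟨a, b⟩ := e
  have h₁ : (a, b) = edge 1 a b := by simp [edge]
  have h₂ : (a, b) = edge (-1) (a + 1) b := by simp [edge]
  obtain ⟨u, hu, hT⟩ := exists_corner_tower hS (.inl rfl) (h₁ ▸ hU) (h₁ ▸ hC)
  obtain ⟨u', hu', hT'⟩ := exists_corner_tower hS (.inr rfl) (h₂ ▸ hU) (h₂ ▸ hC)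
  have hne : u' ≠ u := by
    rintro rfl
    refine (h₁ ▸ hC) _ (compensates_of_vertical hr (.inl rfl) hu (h₁ ▸ hU) hT
      (T := (a + 1, b + u' * r)) ((mem_towersWithin_iff hT').2 ?_) ?_) <;>
      rcases hu with rfl | rfl <;> dsimp only <;> omega
  rcases hu with rfl | rfl
  · obtain rfl : u' = -1 := by omega
    exact ⟨1, a, b, .inl rfl, h₁, by simpa using hT, by simpa [← sub_eq_add_neg] using hT'⟩
  · obtain rfl : u' = 1 := by omega
    exact ⟨-1, a + 1, b, .inr rfl, h₂, by simpa using hT', by simpa [← sub_eq_add_neg] using hT⟩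

theorem towersWithin_eq_pair (hr : 2 ≤ r) (hS : ReachesTwice S r) (hs : s = 1 ∨ s = -1)
    (hu : u = 1 ∨ u = -1) (hU : edge s x y ∈ uncovered S r)
    (hC : ∀ f, ¬ Compensates S r (edge s x y) f)
    (hup : (x, y + u * r) ∈ S) (hdown : (x + s, y - u * r) ∈ S) :
    towersWithin S r (x, y) = {(x, y + u * r), (x - s * r, y)} := by
  have hU' : edge (-s) (x + s) y ∈ uncovered S r := by rwa [edge_neg_add]
  have hsub : towersWithin S r (x, y) ⊆ {(x, y + u * r), (x - s * r, y)} := by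
    intro T hT
    obtain ⟨hside, hdist⟩ := behind_of_uncovered hs hU hT
    have hbelow : ¬ 0 < -u * (T.2 - y) := fun hlt => by
      refine (edge_neg_add s x y ▸ hC) _ (compensates_of_vertical hr (s := -s) (u := -u) (by omega)
        (by omega) hU' ?_ (by simpa using hT) hlt)
      rwa [neg_mul, ← sub_eq_add_neg]
    have habove : ¬ (0 < s * (x - T.1) ∧ 0 < u * (T.2 - y)) := fun hlt =>
      hC _ (compensates_of_diagonal hr hs hu hU hup hdown hT hlt.1 hlt.2)
    simp only [Set.mem_insert_iff, Set.mem_singleton_iff, Prod.ext_iff]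
    rcases hs with rfl | rfl <;> rcases hu with rfl | rfl <;> omega
  have hnt := hS.nontrivial_of_uncovered hs hU
  rcases Set.subset_pair_iff_eq.1 hsub with h | h | h | h
  · exact absurd h hnt.nonempty.ne_empty
  · exact absurd h hnt.ne_singleton
  · exact absurd h hnt.ne_singleton
  · exact h

theorem exists_isPinwheel (hr : 2 ≤ r) (hS : ReachesTwice S r) (hU : e ∈ uncovered S r)
    (hC : ∀ f, ¬ Compensates S r e f) : ∃ s x y, IsPinwheel S r s x y ∧ e = edge s x y := by
  obtain ⟨s, x, y, hs, rfl, hup, hdown⟩ := exists_opposite_corner_towers hr hS hU hC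
  refine ⟨s, x, y, ⟨hs, ?_, ?_⟩, rfl⟩
  · simpa using towersWithin_eq_pair hr hS hs (u := 1) (.inl rfl) hU hC (by simpa) (by simpa)
  · rw [← edge_neg_add] at hU hC
    simpa [← sub_eq_add_neg] using towersWithin_eq_pair hr hS (s := -s) (u := -1) (by omega)
      (.inr rfl) hU hC (by simpa [← sub_eq_add_neg]) (by simpa)

theorem IsPinwheel.eq_or_eq_of_mem_left (hp : IsPinwheel S r s x y)
    (hT : T ∈ towersWithin S r (x, y)) : T = (x, y + ↑r) ∨ T = (x - s * r, y) := by
  rwa [hp.towers_left] at hT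

theorem IsPinwheel.eq_or_eq_of_mem_right (hp : IsPinwheel S r s x y)
    (hT : T ∈ towersWithin S r (x + s, y)) : T = (x + s, y - ↑r) ∨ T = (x + s + s * r, y) := by
  rwa [hp.towers_right] at hT

theorem IsPinwheel.upper_mem (hp : IsPinwheel S r s x y) : (x, y + (r : ℤ)) ∈ S :=
  (hp.towers_left ▸ Set.mem_insert _ _ : _ ∈ towersWithin S r (x, y)).1

theorem IsPinwheel.front_mem (hp : IsPinwheel S r s x y) : (x + s + s * r, y) ∈ S :=
  (hp.towers_right ▸ Set.mem_insert_of_mem _ rfl : _ ∈ towersWithin S r (x + s, y)).1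

theorem IsPinwheel.eq_or_isFifthTower (hr : 2 ≤ r) (hp : IsPinwheel S r s x y)
    (hT : T ∈ towersWithin S r (x + s, y + 1)) : T = (x, y + r) ∨ IsFifthTower S r s x y T := by
  have hleft := hp.eq_or_eq_of_mem_left (T := T)
  have hright := hp.eq_or_eq_of_mem_right (T := T)
  simp only [mem_towersWithin_iff hT.1, Prod.ext_iff] at hleft hright
  have hd := (mem_towersWithin_iff hT.1).1 hT
  rw [or_iff_not_imp_left, Prod.ext_iff]
  intro hne
  rcases hp.dir with rfl | rfl <;> exact ⟨hT.1, by omega, by omega, by omega⟩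

theorem IsPinwheel.exists_isFifthTower (hr : 2 ≤ r) (hS : ReachesTwice S r)
    (hp : IsPinwheel S r s x y) : ∃ G, IsFifthTower S r s x y G := by
  rcases hS (x + s, y + 1) with ⟨T, hT, hlt⟩ | h
  · have hright := hp.eq_or_eq_of_mem_right (T := T)
    rw [mem_towersWithin_iff hT, Prod.ext_iff, Prod.ext_iff] at hright
    simp only [gridDist] at hlt
    rcases hp.dir with rfl | rfl <;> omega
  · obtain ⟨G, hG, hne⟩ := h.exists_ne (x, y + r)
    exact ⟨G, (hp.eq_or_isFifthTower hr hG).resolve_left hne⟩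

theorem IsPinwheel.exists_compensates (hr : 2 ≤ r) (hS : ReachesTwice S r)
    (hp : IsPinwheel S r s x y) : ∃ f, Compensates S r (edge s x y) f := by
  obtain ⟨G, hG⟩ := hp.exists_isFifthTower hr hS
  obtain ⟨hmem, hside, habove, hdist⟩ := hG
  by_cases hy : y + 2 ≤ G.2
  · refine ⟨edge s x (y + 2), ⟨(x, y + r), ?_, G, ?_, ?_⟩,
      .inr (.above s x y hp rfl G ⟨hmem, hside, habove, hdist⟩ hy rfl)⟩
    · simp only [mem_edgeTowers_iff hp.upper_mem, edge]
      rcases hp.dir with rfl | rfl <;> omega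
    · simp only [mem_edgeTowers_iff hmem, edge]
      rcases hp.dir with rfl | rfl <;> omega
    · rintro rfl
      rcases hp.dir with rfl | rfl <;> omega
  · obtain rfl : G = (x + s + s * r, y + 1) := by
      rw [Prod.ext_iff]
      rcases hp.dir with rfl | rfl <;> omega
    refine ⟨edge s (x + 2 * s) (y + 1), ⟨(x + s + s * r, y), ?_, (x + s + s * r, y + 1), ?_, ?_⟩,
      .inr (.front s x y hp rfl hmem rfl)⟩
    · simp only [mem_edgeTowers_iff hp.front_mem, edge]
      rcases hp.dir with rfl | rfl <;> omega
    · simp only [mem_edgeTowers_iff hmem, edge]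
      rcases hp.dir with rfl | rfl <;> omega
    · simp

theorem exists_compensates (hr : 2 ≤ r) (hS : ReachesTwice S r) (hU : e ∈ uncovered S r) :
    ∃ f, Compensates S r e f := by
  by_contra! hC
  obtain ⟨s, x, y, hp, rfl⟩ := exists_isPinwheel hr hS hU hC
  obtain ⟨f, hf⟩ := hp.exists_compensates hr hS
  exact hC f hf

theorem eq_of_inter_uncovered_eq_singleton {N N' : Set (ℤ × ℤ)} (h : N ∩ uncovered S r = {e})
    (h' : N' ∩ uncovered S r = {e'}) (hsub : N ⊆ N') : e = e' := by
  have he : e ∈ N ∩ uncovered S r := h ▸ rfl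
  have he' : e ∈ N' ∩ uncovered S r := ⟨hsub he.1, he.2⟩
  rwa [h'] at he'

theorem Isolates.exists_inter_uncovered_eq_singleton (h : Isolates S r f e) :
    ∃ N, (N = rowNhd f ∨ N = crossNhd f ∨ N = boxNhd f) ∧ N ∩ uncovered S r = {e} := by
  rcases h with h | h | ⟨_, _, _, _, -, -, -, -, -, -, h⟩
  · exact ⟨_, .inl rfl, h⟩
  · exact ⟨_, .inr (.inl rfl), h⟩
  · exact ⟨_, .inr (.inr rfl), h⟩

theorem Isolates.mem_boxNhd (h : Isolates S r f e) : e ∈ boxNhd f := by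
  obtain ⟨N, hN, h⟩ := h.exists_inter_uncovered_eq_singleton
  have he : e ∈ N ∩ uncovered S r := h ▸ rfl
  rcases hN with rfl | rfl | rfl
  · exact crossNhd_subset_boxNhd (rowNhd_subset_crossNhd he.1)
  · exact crossNhd_subset_boxNhd he.1
  · exact he.1

theorem Isolates.unique (h : Isolates S r f e) (h' : Isolates S r f e') : e = e' := by
  obtain ⟨N, hN, h⟩ := h.exists_inter_uncovered_eq_singleton
  obtain ⟨N', hN', h'⟩ := h'.exists_inter_uncovered_eq_singleton
  have hnested : N ⊆ N' ∨ N' ⊆ N := by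
    rcases hN with rfl | rfl | rfl <;> rcases hN' with rfl | rfl | rfl <;>
      simp [rowNhd_subset_crossNhd, crossNhd_subset_boxNhd,
        rowNhd_subset_crossNhd.trans crossNhd_subset_boxNhd]
  rcases hnested with hsub | hsub
  · exact eq_of_inter_uncovered_eq_singleton h h' hsub
  · exact (eq_of_inter_uncovered_eq_singleton h' h hsub).symm

theorem IsPinwheel.eq_edge_of_mem_boxNhd_above (hr : 2 ≤ r) (hp : IsPinwheel S r s x y)
    {G : ℤ × ℤ} (hG : IsFifthTower S r s x y G) (hy : y + 2 ≤ G.2)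
    (he : e ∈ boxNhd (edge s x (y + 2))) (hU : e ∈ uncovered S r) :
    e = edge s (x + s) (y + 1) := by
  have hupper := notMem_edgeTowers (T := (x, y + (r : ℤ))) hU
  have hfifth := notMem_edgeTowers (T := G) hU
  rw [mem_edgeTowers_iff hp.upper_mem] at hupper
  rw [mem_edgeTowers_iff hG.mem] at hfifth
  obtain ⟨-, hside, -, hdist⟩ := hG
  simp only [mem_boxNhd_iff, edge, Prod.ext_iff] at he ⊢
  rcases hp.dir with rfl | rfl <;> omega

theorem IsPinwheel.eq_edge_of_mem_boxNhd_front (hr : 2 ≤ r) (hp : IsPinwheel S r s x y)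
    (hG : (x + s + s * r, y + 1) ∈ S) (he : e ∈ boxNhd (edge s (x + 2 * s) (y + 1)))
    (hU : e ∈ uncovered S r) : e = edge s (x + s) (y + 2) := by
  have hfront := notMem_edgeTowers (T := (x + s + s * r, y)) hU
  have hfifth := notMem_edgeTowers (T := (x + s + s * r, y + 1)) hU
  rw [mem_edgeTowers_iff hp.front_mem] at hfront
  rw [mem_edgeTowers_iff hG] at hfifth
  simp only [mem_boxNhd_iff, edge, Prod.ext_iff] at he ⊢
  rcases hp.dir with rfl | rfl <;> omega

theorem PinwheelCompensates.notMem_crossNhd (hr : 2 ≤ r) (h : PinwheelCompensates S r e f)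
    (hU : e' ∈ uncovered S r) : e' ∉ crossNhd f := by
  intro he'
  have hbox := crossNhd_subset_boxNhd he'
  have hcross := gridDist_le_iff.1 he'
  rcases h with ⟨s, x, y, hp, -, G, hG, hy, rfl⟩ | ⟨s, x, y, hp, -, hG, rfl⟩
  · obtain rfl := hp.eq_edge_of_mem_boxNhd_above hr hG hy hbox hU
    simp only [edge] at hcross
    rcases hp.dir with rfl | rfl <;> omega
  · obtain rfl := hp.eq_edge_of_mem_boxNhd_front hr hG hbox hU
    simp only [edge] at hcross
    rcases hp.dir with rfl | rfl <;> omega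

theorem PinwheelCompensates.not_isolatesDiagonally (hr : 2 ≤ r) (h : PinwheelCompensates S r e f) :
    ¬ IsolatesDiagonally S r f e' := by
  rintro ⟨s', u', x', y', hs', hu', he', hf', hup, hdown, hbox⟩
  obtain ⟨hbox, hU⟩ : e' ∈ boxNhd f ∩ uncovered S r := hbox ▸ rfl
  -- One of the two corner towers around `e'` would be a third tower within `r` of `(x + s, y)`.
  rcases h with ⟨s, x, y, hp, -, G, hG, hy, rfl⟩ | ⟨s, x, y, hp, -, hG, rfl⟩
  · have hright := hp.eq_or_eq_of_mem_right (T := (x' + s', y' - u' * r))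
    rw [mem_towersWithin_iff hdown] at hright
    rw [hp.eq_edge_of_mem_boxNhd_above hr hG hy hbox hU] at he'
    simp only [edge, Prod.ext_iff] at he' hf' hright
    obtain rfl : u' = 1 := by omega
    rcases hp.dir with rfl | rfl <;> rcases hs' with rfl | rfl <;> omega
  · have hright := hp.eq_or_eq_of_mem_right (T := (x', y' + u' * r))
    rw [mem_towersWithin_iff hup] at hright
    rw [hp.eq_edge_of_mem_boxNhd_front hr hG hbox hU] at he'
    simp only [edge, Prod.ext_iff] at he' hf' hright
    obtain rfl : u' = -1 := by omega
    rcases hp.dir with rfl | rfl <;> rcases hs' with rfl | rfl <;> omega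

theorem PinwheelCompensates.not_isolates (hr : 2 ≤ r) (h : PinwheelCompensates S r e f) :
    ¬ Isolates S r f e' := by
  rintro (hN | hN | hN)
  · have he' : e' ∈ rowNhd f ∩ uncovered S r := hN ▸ rfl
    exact h.notMem_crossNhd hr he'.2 (rowNhd_subset_crossNhd he'.1)
  · have he' : e' ∈ crossNhd f ∩ uncovered S r := hN ▸ rfl
    exact h.notMem_crossNhd hr he'.2 he'.1
  · exact h.not_isolatesDiagonally hr hN

theorem IsPinwheel.above_ne_front {s' x' y' : ℤ} (hr : 2 ≤ r) (hp : IsPinwheel S r s x y)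
    (hU : edge s x y ∈ uncovered S r) (hp' : IsPinwheel S r s' x' y') :
    edge s x (y + 2) ≠ edge s' (x' + 2 * s') (y' + 1) := by
  intro hf
  -- The front tower of the second pinwheel would then be within `r` of `(x, y)`.
  have hcov := notMem_edgeTowers (T := (x' + s' + s' * r, y')) hU
  have hleft := hp.eq_or_eq_of_mem_left (T := (x' + s' + s' * r, y'))
  rw [mem_edgeTowers_iff hp'.front_mem] at hcov
  rw [mem_towersWithin_iff hp'.front_mem, Prod.ext_iff, Prod.ext_iff] at hleft
  simp only [edge, Prod.ext_iff] at hf hcov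
  rcases hp.dir with rfl | rfl <;> rcases hp'.dir with rfl | rfl <;> omega

theorem IsPinwheel.eq_of_front_eq {s' x' y' : ℤ} (hr : 2 ≤ r) (hp : IsPinwheel S r s x y)
    (hU : edge s x y ∈ uncovered S r) (hp' : IsPinwheel S r s' x' y')
    (hf : edge s (x + 2 * s) (y + 1) = edge s' (x' + 2 * s') (y' + 1)) :
    edge s x y = edge s' x' y' := by
  have hcov := notMem_edgeTowers (T := (x' + s' + s' * r, y')) hU
  rw [mem_edgeTowers_iff hp'.front_mem] at hcov
  simp only [edge, Prod.ext_iff] at hf hcov ⊢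
  -- Pinwheels of opposite directions would face each other, the front tower of each covering the
  -- central edge of the other.
  rcases hp.dir with rfl | rfl <;> rcases hp'.dir with rfl | rfl <;> omega

theorem PinwheelCompensates.unique (hr : 2 ≤ r) (hU : e ∈ uncovered S r)
    (hU' : e' ∈ uncovered S r) (h : PinwheelCompensates S r e f)
    (h' : PinwheelCompensates S r e' f) : e = e' := by
  rcases h with ⟨s, x, y, hp, rfl, _, -, -, rfl⟩ | ⟨s, x, y, hp, rfl, -, rfl⟩ <;>
    rcases h' with ⟨s', x', y', hp', rfl, _, -, -, hf⟩ | ⟨s', x', y', hp', rfl, -, hf⟩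
  · simpa [edge] using hf
  · exact absurd hf (hp.above_ne_front hr hU hp')
  · exact absurd hf.symm (hp'.above_ne_front hr hU' hp)
  · exact hp.eq_of_front_eq hr hU hp' hf

theorem Compensates.unique (hr : 2 ≤ r) (hU : e ∈ uncovered S r) (hU' : e' ∈ uncovered S r)
    (h : Compensates S r e f) (h' : Compensates S r e' f) : e = e' := by
  rcases h.kind with h | h <;> rcases h'.kind with h' | h'
  · exact h.unique h'
  · exact absurd h (h'.not_isolates hr)
  · exact absurd h' (h.not_isolates hr)
  · exact h.unique hr hU hU' h'

theorem Compensates.mem_Icc (h : Compensates S r e f) :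
    f.1 ∈ Set.Icc (e.1 - 2) (e.1 + 2) ∧ f.2 ∈ Set.Icc (e.2 - 2) (e.2 + 2) := by
  simp only [Set.mem_Icc]
  rcases h.kind with hN | ⟨s, x, y, -, rfl, -, -, -, rfl⟩ | ⟨s, x, y, hp, rfl, -, rfl⟩
  · have := mem_boxNhd_iff.1 hN.mem_boxNhd
    omega
  · simp only [edge]
    omega
  · simp only [edge]
    rcases hp.dir with rfl | rfl <;> omega

end Compensation

section Counting

variable {S : Set (ℤ × ℤ)} {r : ℕ}

theorem IsBroadcast.reachesTwice (hS : IsBroadcast (r + 1) 2 S) : ReachesTwice S r := by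
  classical
  intro v
  by_contra! h
  obtain ⟨hfar, hsub⟩ := h
  have hsignal : totalSignal (r + 1) S v ≤ 1 := by
    refine (Finset.sum_le_card_nsmul _ _ 1 fun T hT => ?_).trans ?_
    · have := hfar T (Finset.mem_filter.1 hT).2.1
      omega
    · rw [nsmul_one, Nat.cast_id, Finset.card_le_one]
      intro T hT T' hT'
      obtain ⟨-, hT, hlt⟩ := Finset.mem_filter.1 hT
      obtain ⟨-, hT', hlt'⟩ := Finset.mem_filter.1 hT'
      exact hsub ⟨hT, Nat.le_of_lt_succ hlt⟩ ⟨hT', Nat.le_of_lt_succ hlt'⟩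
  exact absurd ((hS v).trans hsignal) (by decide)

/-- The square `V_n`, consisting of the grid points with coordinates between `-n` and `n`. -/
noncomputable def gridBox (n : ℕ) : Finset (ℤ × ℤ) :=
  Finset.Icc (-(n : ℤ)) n ×ˢ Finset.Icc (-(n : ℤ)) n

theorem mem_gridBox {n : ℕ} {v : ℤ × ℤ} :
    v ∈ gridBox n ↔ (-(n : ℤ) ≤ v.1 ∧ v.1 ≤ n) ∧ -(n : ℤ) ≤ v.2 ∧ v.2 ≤ n := by
  simp only [gridBox, Finset.mem_product, Finset.mem_Icc]

theorem card_gridBox (n : ℕ) : (gridBox n).card = (2 * n + 1) ^ 2 := by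
  have hside : ((n : ℤ) + 1 - -(n : ℤ)).toNat = 2 * n + 1 := by omega
  rw [gridBox, Finset.card_product, Int.card_Icc, hside, sq]

theorem edgeTowers_subset_gridBox {n : ℕ} {e : ℤ × ℤ} (he : e ∈ gridBox n) :
    edgeTowers S r e ⊆ gridBox (n + r) := fun T hT => by
  have hd := (mem_towersWithin_iff hT.1.1).1 hT.1
  rw [mem_gridBox] at he
  rw [Finset.mem_coe, mem_gridBox]
  push_cast
  omega

open Classical in
theorem card_filter_mem_edgeTowers_le (S : Set (ℤ × ℤ)) (r : ℕ) (T : ℤ × ℤ)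
    (B : Finset (ℤ × ℤ)) : (B.filter fun e => T ∈ edgeTowers S r e).card ≤ 2 * r ^ 2 := by
  have hcard : (Finset.Ico (-(r : ℤ)) r ×ˢ Finset.Ico (0 : ℤ) r).card = 2 * r ^ 2 := by
    have hlong : ((r : ℤ) - -(r : ℤ)).toNat = 2 * r := by omega
    rw [Finset.card_product, Int.card_Ico, Int.card_Ico, hlong, sub_zero, Int.toNat_natCast]
    ring
  rw [← hcard]
  -- An edge with left endpoint `T + (p, q)` lies in the ball when `p + q` and `p - q` are in
  -- `[-r, r)`; as they have the same parity, `p + q` and `⌊(p - q + r) / 2⌋` determine the edge.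
  refine Finset.card_le_card_of_injOn
    (fun e => (e.1 - T.1 + (e.2 - T.2), (e.1 - T.1 - (e.2 - T.2) + r) / 2)) ?_ ?_
  · intro e he
    have hmem := (Finset.mem_filter.1 he).2
    rw [mem_edgeTowers_iff hmem.1.1] at hmem
    simp only [Finset.coe_product, Set.mem_prod, Finset.coe_Ico, Set.mem_Ico]
    omega
  · rintro e - e' - heq
    simp only [Prod.mk.injEq] at heq
    rw [Prod.ext_iff]
    omega

open Classical in
theorem indicator_nonempty_add_indicator_nontrivial_le_card {α : Type*} {A : Set α} {P : Finset α}
    (hA : A ⊆ P) : (if A.Nonempty then 1 else 0) + (if A.Nontrivial then 1 else 0) ≤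
      (P.filter (· ∈ A)).card := by
  have hfilter : (P.filter (· ∈ A) : Set α) = A := by
    ext a
    simpa using @hA a
  by_cases h₂ : A.Nontrivial
  · have : (P.filter (· ∈ A)).Nontrivial := by rwa [Finset.Nontrivial, hfilter]
    rw [if_pos h₂.nonempty, if_pos h₂]
    exact Finset.one_lt_card_iff_nontrivial.2 this
  · by_cases h₁ : A.Nonempty
    · have : (P.filter (· ∈ A)).Nonempty := by rwa [← Finset.coe_nonempty, hfilter]
      rw [if_pos h₁, if_neg h₂]
      exact this.card_pos
    · rw [if_neg h₁, if_neg h₂]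
      exact Nat.zero_le _

open Classical in
theorem card_covered_add_card_doublyCovered_le {B P : Finset (ℤ × ℤ)}
    (hP : ∀ e ∈ B, edgeTowers S r e ⊆ P) :
    (B.filter fun e => (edgeTowers S r e).Nonempty).card +
      (B.filter fun e => (edgeTowers S r e).Nontrivial).card ≤ P.card * (2 * r ^ 2) := by
  calc
    _ = ∑ e ∈ B, ((if (edgeTowers S r e).Nonempty then 1 else 0) +
        if (edgeTowers S r e).Nontrivial then 1 else 0) := by
      rw [Finset.sum_add_distrib, Finset.card_filter, Finset.card_filter]
    _ ≤ ∑ e ∈ B, (P.filter (· ∈ edgeTowers S r e)).card :=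
      Finset.sum_le_sum fun e he => indicator_nonempty_add_indicator_nontrivial_le_card (hP e he)
    _ = ∑ T ∈ P, (B.filter fun e => T ∈ edgeTowers S r e).card :=
      Finset.sum_card_bipartiteAbove_eq_sum_card_bipartiteBelow fun e T => T ∈ edgeTowers S r e
    _ ≤ P.card * (2 * r ^ 2) :=
      Finset.sum_le_card_nsmul _ _ _ fun T _ => card_filter_mem_edgeTowers_le S r T B

open Classical in
theorem card_uncovered_le_card_doublyCovered (hr : 2 ≤ r) (hS : ReachesTwice S r) (n : ℕ) :
    ((gridBox n).filter (· ∈ uncovered S r)).card ≤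
      ((gridBox (n + 2)).filter fun e => (edgeTowers S r e).Nontrivial).card := by
  refine Finset.card_le_card_of_forall_subsingleton (Compensates S r) (fun e he => ?_) ?_
  · obtain ⟨he, hU⟩ := Finset.mem_filter.1 he
    obtain ⟨f, hf⟩ := exists_compensates hr hS hU
    refine ⟨f, Finset.mem_filter.2 ⟨?_, hf.nontrivial⟩, hf⟩
    have hclose := hf.mem_Icc
    simp only [Set.mem_Icc] at hclose
    rw [mem_gridBox] at he ⊢
    push_cast
    omega
  · rintro f - e ⟨he, hf⟩ e' ⟨he', hf'⟩
    exact hf.unique hr (Finset.mem_filter.1 he).2 (Finset.mem_filter.1 he').2 hf'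

theorem ReachesTwice.sq_le_gridCount_mul (hr : 2 ≤ r) (hS : ReachesTwice S r) (n : ℕ) :
    (2 * n + 1) ^ 2 ≤ gridCount S (n + (2 + r)) * (2 * r ^ 2) := by
  classical
  have hmono : gridBox n ⊆ gridBox (n + 2) := fun e he => by
    rw [mem_gridBox] at he ⊢
    push_cast
    omega
  calc
    (2 * n + 1) ^ 2 = ((gridBox n).filter fun e => (edgeTowers S r e).Nonempty).card +
        ((gridBox n).filter (· ∈ uncovered S r)).card := by
      rw [← card_gridBox, ← Finset.card_filter_add_card_filter_not
        (fun e => (edgeTowers S r e).Nonempty)]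
      simp only [Set.not_nonempty_iff_eq_empty, uncovered, Set.mem_ofPred_eq]
      congr!
    _ ≤ ((gridBox (n + 2)).filter fun e => (edgeTowers S r e).Nonempty).card +
        ((gridBox (n + 2)).filter fun e => (edgeTowers S r e).Nontrivial).card := by
      refine Nat.add_le_add (by gcongr) ?_
      exact card_uncovered_le_card_doublyCovered hr hS n
    _ ≤ ((gridBox (n + (2 + r))).filter (· ∈ S)).card * (2 * r ^ 2) := by
      refine card_covered_add_card_doublyCovered_le fun e he T hT => ?_
      rw [Finset.coe_filter]
      exact ⟨add_assoc n 2 r ▸ edgeTowers_subset_gridBox he hT, hT.1.1⟩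
    _ = gridCount S (n + (2 + r)) * (2 * r ^ 2) := by
      rw [gridCount, gridBox]

theorem gridCount_le (S : Set (ℤ × ℤ)) (n : ℕ) : gridCount S n ≤ (2 * n + 1) ^ 2 := by
  classical
  rw [← card_gridBox]
  exact Finset.card_filter_le _ _

end Counting

theorem le_liminf_gridCount_div {S : Set (ℤ × ℤ)} {c : ℝ} {k : ℕ}
    (h : ∀ n : ℕ, c * (2 * n + 1) ^ 2 ≤ gridCount S (n + k)) :
    c ≤ atTop.liminf fun n : ℕ => (gridCount S n : ℝ) / (2 * n + 1) ^ 2 := by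
  have hlim : Tendsto (fun n : ℕ => c * ((1 + 2 * n : ℝ) / (2 * k + 1 + 2 * n)) ^ 2) atTop
      (𝓝 c) := by
    simpa using ((tendsto_add_mul_div_add_mul_atTop_nhds (1 : ℝ) (2 * k + 1) 2 two_ne_zero).pow
      2).const_mul c
  rw [← liminf_nat_add _ k, ← hlim.liminf_eq]
  refine liminf_le_liminf (.of_forall fun n => ?_) hlim.isBoundedUnder_ge ?_
  · rw [div_pow, ← mul_div_assoc]
    have hden : (2 * k + 1 + 2 * n : ℝ) = 2 * (n + k : ℕ) + 1 := by
      push_cast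
      ring
    rw [hden, add_comm 1 (2 * (n : ℝ))]
    gcongr
    exact h n
  · refine IsBoundedUnder.isCoboundedUnder_ge (isBoundedUnder_of ⟨1, fun n => ?_⟩)
    exact div_le_one_of_le₀ (mod_cast gridCount_le S (n + k)) (by positivity)

theorem stmt5 (t : ℕ) (ht : 2 < t) (S : Set (ℤ × ℤ)) (hS : IsBroadcast t 2 S) :
    1 / (2 * ((t : ℝ) - 1) ^ 2) ≤
      Filter.atTop.liminf (fun n : ℕ => (gridCount S n : ℝ) / (2 * n + 1) ^ 2) := by
  obtain ⟨r, rfl⟩ : ∃ r, t = r + 1 := ⟨t - 1, by omega⟩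
  have hr : 2 ≤ r := by omega
  refine le_liminf_gridCount_div (k := 2 + r) fun n => ?_
  rw [Nat.cast_add_one, add_sub_cancel_right, one_div_mul_eq_div, div_le_iff₀ (by positivity)]
  exact_mod_cast hS.reachesTwice.sq_le_gridCount_mul hr n
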